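/- Let σ ∈ (0,1) be a constant. For all sufficiently large n the following holds. Fix a sequence of matchings on a graph with n vertices, a non-negative integer load vector x^{(t₁)} with ‖x^{(t₁)}‖₁ ≤ n·e^{−(log n)^{σ}}, and a round t₂ > t₁ such that the time-interval [t₁,t₂] is (n, n^{−3})-smoothing. Run the discrete process with independent uniformly random orientations from round t₁+1 to t₂, and let Z := Σ_{v∈V} y_v x_v^{(t₂)}, where y is any non-negative vector with ‖y‖₁ = 1. Then for any δ > 0, P( Z ≥ e^{−(1/5)(log n)^{σ}} + 8‖y‖_∞·(log n)^{δ} ) ≤ e^{−(log n)^{δ+σ}/6}, where log denotes the natural logarithm. -/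

import Mathlib

namespace LB


/-- A matching on the vertex set `Fin n`, encoded as an involution;
`f u = u` means that `u` is unmatched, and `f u = v ≠ u` means `{u,v}`
is an edge of the matching. -/
structure Matching (n : ℕ) where
  f : Fin n → Fin n
  invol : ∀ u, f (f u) = u

/-- The matching matrix of a matching: entries `1/2` at `(u,u)`, `(u,v)`, `(v,u)`, `(v,v)`
for matched pairs `{u,v}`, entry `1` at `(w,w)` for unmatched `w`, and `0` otherwise. -/
noncomputable def Matching.matrix {n : ℕ} (m : Matching n) : Matrix (Fin n) (Fin n) ℝ :=
  Matrix.of fun u v =>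
    if m.f u = u then (if v = u then 1 else 0)
    else if v = u ∨ v = m.f u then (1 : ℝ) / 2 else 0

/-- `M^{[t₁,t₂]} = M^{(t₁)} * ⋯ * M^{(t₂)}` (the identity matrix if `t₁ > t₂`). -/
noncomputable def prodMatrix {n : ℕ} (M : ℕ → Matching n) (t₁ t₂ : ℕ) : Matrix (Fin n) (Fin n) ℝ :=
  ((List.range' t₁ (t₂ + 1 - t₁)).map fun s => (M s).matrix).prod

/-- Sum of `g u v` over the matched pairs `[u:v]` (i.e. `{u,v}` in the matching with `u < v`). -/
noncomputable def pairSum {n : ℕ} (m : Matching n) (g : Fin n → Fin n → ℝ) : ℝ :=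
  ∑ u : Fin n, if u < m.f u then g u (m.f u) else 0

/-- The discrepancy `max_{u,v} |x_u - x_v|` of a load vector. -/
noncomputable def disc {n : ℕ} (x : Fin n → ℝ) : ℝ :=
  ⨆ u : Fin n, ⨆ v : Fin n, |x u - x v|

/-- Discrepancy of an integer load vector. -/
noncomputable def discZ {n : ℕ} (x : Fin n → ℤ) : ℝ := disc fun u => (x u : ℝ)

/-- The time interval `[t₁,t₂]` (with its matchings) is `(K,ε)`-smoothing. -/
def IsSmoothing {n : ℕ} (M : ℕ → Matching n) (t₁ t₂ : ℕ) (K ε : ℝ) : Prop :=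
  ∀ ξ : Fin n → ℝ, disc ξ ≤ K → disc (Matrix.vecMul ξ (prodMatrix M (t₁ + 1) t₂)) ≤ ε

/-- `τ_cont(K,ε)`: the minimum `t` such that `[0,t]` is `(K,ε)`-smoothing. -/
noncomputable def tauCont {n : ℕ} (M : ℕ → Matching n) (K ε : ℝ) : ℕ :=
  sInf {t : ℕ | IsSmoothing M 0 t K ε}

/-- One round of the discrete process: two matched nodes split their total load,
the node indicated by the orientation bit (stored at the pair `(min,max)`) receiving
the excess token; `φ u v = true` for `u < v` means the excess token goes to `u`. -/
def step {n : ℕ} (m : Matching n) (φ : Fin n → Fin n → Bool) (x : Fin n → ℤ) :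
    Fin n → ℤ := fun u =>
  if m.f u = u then x u
  else if u < m.f u then
    (if φ u (m.f u) then Int.ediv (x u + x (m.f u) + 1) 2
     else Int.ediv (x u + x (m.f u)) 2)
  else
    (if φ (m.f u) u then Int.ediv (x u + x (m.f u)) 2
     else Int.ediv (x u + x (m.f u) + 1) 2)

/-- The discrete process started at round `t₁` from load vector `x`:
`loadsFrom M t₁ Φ x r` is the load vector `r` rounds later; the `(r+1)`-st
step uses the matching `M (t₁+r+1)` and the orientations `Φ (r+1)`. -/
def loadsFrom {n : ℕ} (M : ℕ → Matching n) (t₁ : ℕ) (Φ : ℕ → Fin n → Fin n → Bool)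
    (x : Fin n → ℤ) : ℕ → Fin n → ℤ
  | 0 => x
  | r + 1 => step (M (t₁ + r + 1)) (Φ (r + 1)) (loadsFrom M t₁ Φ x r)

/-- The discrete process started at round `0`; round `t ≥ 1` uses matching `M t`. -/
def loads {n : ℕ} (M : ℕ → Matching n) (Φ : ℕ → Fin n → Fin n → Bool)
    (x : Fin n → ℤ) : ℕ → Fin n → ℤ := loadsFrom M 0 Φ x

/-- Extend a finite family of random choices (one for each of the rounds `1,…,T`)
to all rounds: round `s` reads index `s-1`. -/
def lift {A : Type*} (a₀ : A) {T : ℕ} (ω : Fin T → A) : ℕ → A := fun s =>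
  if h : s - 1 < T then ω ⟨s - 1, h⟩ else a₀

/-- Default (irrelevant) orientation. -/
def orientDefault (n : ℕ) : Fin n → Fin n → Bool := fun _ _ => true

/-- Probability of an event under the uniform distribution on a finite sample space;
this makes all the per-round random choices independent and uniform. -/
noncomputable def pr {Ω : Type*} [Fintype Ω] (A : Ω → Prop) : ℝ :=
  haveI := Classical.decPred A
  ((Finset.univ.filter A).card : ℝ) / (Fintype.card Ω : ℝ)

/-- Expectation under the uniform distribution on a finite sample space. -/
noncomputable def ex {Ω : Type*} [Fintype Ω] (Z : Ω → ℝ) : ℝ :=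
  (∑ ω : Ω, Z ω) / (Fintype.card Ω : ℝ)

/-- `λ(M) = max{|λ₂(M)|, |λ_n(M)|}` for a symmetric doubly stochastic matrix `M`,
characterized as the operator norm of `M` on the subspace orthogonal to `𝟙`. -/
noncomputable def lamMax {n : ℕ} (M : Matrix (Fin n) (Fin n) ℝ) : ℝ :=
  ⨆ x : {x : Fin n → ℝ // (∑ u, x u) = 0 ∧ (∑ u, (x u) ^ 2) = 1},
    Real.sqrt (∑ u, (M.mulVec x.1 u) ^ 2)

/-- The round matrix `M = M^{(1)} ⋯ M^{(d)}` of the balancing circuit. -/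
noncomputable def roundMatrix {n d : ℕ} (Ms : Fin d → Matching n) : Matrix (Fin n) (Fin n) ℝ :=
  (List.ofFn fun i => (Ms i).matrix).prod

/-- The periodic sequence of matchings of the balancing circuit:
round `t` uses `M^{(((t-1) mod d)+1)}`. -/
def circuit {n d : ℕ} (hd : 0 < d) (Ms : Fin d → Matching n) : ℕ → Matching n :=
  fun t => Ms ⟨(t - 1) % d, Nat.mod_lt _ hd⟩


theorem prod_regroup {n : ℕ} (m : Matching n) (g : Fin n → ℝ) :
    ∏ v, g v = ∏ u, (if u < m.f u then g u * g (m.f u) else if m.f u = u then g u else 1) := by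
  have h1 : ∏ u, (if m.f u < u then g u else 1) = ∏ u, (if u < m.f u then g (m.f u) else 1) := by
    refine Finset.prod_bij' (fun u _ => m.f u) (fun u _ => m.f u) ?_ ?_ ?_ ?_ ?_ <;>
      simp [m.invol]
  have h2 : ∏ v, g v = (∏ u, (if u < m.f u then g u else 1)) *
      (∏ u, (if m.f u = u then g u else 1)) * ∏ u, (if m.f u < u then g u else 1) := by
    rw [← Finset.prod_mul_distrib, ← Finset.prod_mul_distrib]
    refine Finset.prod_congr rfl fun u _ => ?_
    rcases lt_trichotomy u (m.f u) with h | h | h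
    · simp [h, h.ne', h.not_gt]
    · simp [← h]
    · simp [h, h.ne, h.not_gt]
  rw [h2, h1, ← Finset.prod_mul_distrib, ← Finset.prod_mul_distrib]
  refine Finset.prod_congr rfl fun u _ => ?_
  rcases lt_trichotomy u (m.f u) with h | h | h
  · simp [h, h.ne']
  · simp [← h]
  · simp [h.ne, h.not_gt]

theorem pair_bound (p q : ℝ) (hp : 0 ≤ p) (hq : 0 ≤ q) (k : ℕ) :
    p ^ ((k + 1) / 2) * q ^ (k / 2) + p ^ (k / 2) * q ^ ((k + 1) / 2)
      ≤ 2 * ((p + q) / 2) ^ k := by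
  have h : p * q ≤ ((p + q) / 2) ^ 2 := by nlinarith [sq_nonneg (p - q)]
  have h0 : 0 ≤ p * q := by positivity
  rcases Nat.even_or_odd' k with ⟨j, rfl | rfl⟩
  · have e1 : (2 * j + 1) / 2 = j := by omega
    have e2 : (2 * j) / 2 = j := by omega
    rw [e1, e2, ← mul_pow, pow_mul]
    have := pow_le_pow_left₀ h0 h j
    linarith
  · have e1 : (2 * j + 1 + 1) / 2 = j + 1 := by omega
    have e2 : (2 * j + 1) / 2 = j := by omega
    rw [e1, e2, pow_succ ((p + q) / 2), pow_mul]
    have := pow_le_pow_left₀ h0 h j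
    have h3 : p ^ (j + 1) * q ^ j + p ^ j * q ^ (j + 1) = (p * q) ^ j * (p + q) := by
      rw [mul_pow]; ring
    rw [h3]
    nlinarith [mul_le_mul_of_nonneg_right this (add_nonneg hp hq)]

theorem mulVec_fix {n : ℕ} (m : Matching n) (f : Fin n → ℝ) (u : Fin n) (h : m.f u = u) :
    m.matrix.mulVec f u = f u := by
  simp [Matrix.mulVec, dotProduct, Matching.matrix, h]

theorem mulVec_pair {n : ℕ} (m : Matching n) (f : Fin n → ℝ) (u : Fin n) (h : m.f u ≠ u) :
    m.matrix.mulVec f u = (f u + f (m.f u)) / 2 := by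
  have : ∀ v, (if v = u ∨ v = m.f u then (1:ℝ)/2 else 0) * f v
      = (if v = u then f v / 2 else 0) + (if v = m.f u then f v / 2 else 0) := by
    intro v
    by_cases h1 : v = u
    · subst h1; simp [h.symm]; ring
    · by_cases h2 : v = m.f u
      · simp [h1, ← h2]; ring
      · simp [h1, h2]
  simp only [Matrix.mulVec, dotProduct, Matching.matrix, Matrix.of_apply, h, if_false, this,
    Finset.sum_add_distrib, Finset.sum_ite_eq', Finset.mem_univ, if_true]
  ring

theorem mulVec_nonneg' {n : ℕ} (m : Matching n) (f : Fin n → ℝ) (hf : ∀ v, 0 ≤ f v) (u : Fin n) :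
    0 ≤ m.matrix.mulVec f u := by
  by_cases h : m.f u = u
  · rw [mulVec_fix m f u h]; exact hf u
  · rw [mulVec_pair m f u h]; have := hf u; have := hf (m.f u); positivity

theorem step_nonneg {n : ℕ} (m : Matching n) (φ : Fin n → Fin n → Bool) (x : Fin n → ℤ)
    (hx : ∀ u, 0 ≤ x u) (u : Fin n) : 0 ≤ step m φ x u := by
  have h1 := hx u
  have h2 := hx (m.f u)
  have e : ∀ a : ℤ, Int.ediv a 2 = a / 2 := fun _ => rfl
  unfold step
  simp only [e]
  split_ifs <;> omega

theorem one_step {n : ℕ} (m : Matching n) (x : Fin n → ℤ) (hx : ∀ u, 0 ≤ x u)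
    (f : Fin n → ℝ) (hf : ∀ v, 0 ≤ f v) :
    ∑ φ : Fin n → Fin n → Bool, ∏ v, f v ^ (step m φ x v).toNat
      ≤ (Fintype.card (Fin n → Fin n → Bool) : ℝ) * ∏ v, (m.matrix.mulVec f v) ^ (x v).toNat := by
  have e : ∀ a : ℤ, Int.ediv a 2 = a / 2 := fun _ => rfl
  obtain ⟨z, hz⟩ : ∃ z : Fin n → ℕ, ∀ u, x u = z u := ⟨fun u => (x u).toNat, fun u => by
    have := hx u; simp [this]⟩
  set H : Fin n → (Fin n → Bool) → ℝ := fun u r =>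
    if u < m.f u then
      (if r (m.f u) then f u ^ ((z u + z (m.f u) + 1) / 2) * f (m.f u) ^ ((z u + z (m.f u)) / 2)
       else f u ^ ((z u + z (m.f u)) / 2) * f (m.f u) ^ ((z u + z (m.f u) + 1) / 2))
    else if m.f u = u then f u ^ z u else 1 with hH
  set B : Fin n → ℝ := fun u =>
    if u < m.f u then ((f u + f (m.f u)) / 2) ^ (z u + z (m.f u))
    else if m.f u = u then f u ^ z u else 1 with hB
  have hl : ∀ φ : Fin n → Fin n → Bool, ∏ v, f v ^ (step m φ x v).toNat = ∏ u, H u (φ u) := by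
    intro φ
    rw [prod_regroup m]
    refine Finset.prod_congr rfl fun u _ => ?_
    rcases lt_trichotomy u (m.f u) with h | h | h
    · have t1 : ∀ k : ℕ, ((k : ℤ) / 2).toNat = k / 2 := fun k => by omega
      have c1 : (((z u : ℤ) + z (m.f u) + 1) / 2).toNat = (z u + z (m.f u) + 1) / 2 := by omega
      have c2 : (((z u : ℤ) + z (m.f u)) / 2).toNat = (z u + z (m.f u)) / 2 := by omega
      have c3 : (((z (m.f u) : ℤ) + z u + 1) / 2).toNat = (z u + z (m.f u) + 1) / 2 := by omega
      have c4 : (((z (m.f u) : ℤ) + z u) / 2).toNat = (z u + z (m.f u)) / 2 := by omega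
      cases hφ : φ u (m.f u) <;>
        simp [hH, step, h, h.ne, h.ne', h.not_gt, m.invol, hφ, hz, e, c1, c2, c3, c4]
    · simp [hH, ← h, step, hz]
    · simp [hH, h.ne, h.not_gt]
  have hr : ∏ v, (m.matrix.mulVec f v) ^ (x v).toNat = ∏ u, B u := by
    rw [prod_regroup m]
    refine Finset.prod_congr rfl fun u _ => ?_
    rcases lt_trichotomy u (m.f u) with h | h | h
    · have h' : m.f (m.f u) ≠ m.f u := by rw [m.invol]; exact h.ne
      simp only [hB, h, if_true, mulVec_pair m f u h.ne', mulVec_pair m f _ h', m.invol, hz,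
        Int.toNat_natCast]
      rw [add_comm (f (m.f u)), pow_add]
    · simp [hB, ← h, hz, mulVec_fix m f u h.symm]
    · simp [hB, h.ne, h.not_gt]
  have hH0 : ∀ u r, 0 ≤ H u r := by
    intro u r
    have := hf u
    have := hf (m.f u)
    simp only [hH]
    split_ifs <;> positivity
  have hpair : ∀ u r, H u r + H u (fun i => !(r i)) ≤ 2 * B u := by
    intro u r
    simp only [hH, hB]
    by_cases h : u < m.f u
    · have := pair_bound (f u) (f (m.f u)) (hf _) (hf _) (z u + z (m.f u))
      rcases Bool.eq_false_or_eq_true (r (m.f u)) with hr | hr <;> simp [h, hr] <;> linarith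
    · simp only [h, if_false]; rw [two_mul]
  have hsum : ∀ u, ∑ r : Fin n → Bool, H u r ≤ (Fintype.card (Fin n → Bool) : ℝ) * B u := by
    intro u
    let σ : (Fin n → Bool) ≃ (Fin n → Bool) :=
      ⟨fun r i => !(r i), fun r i => !(r i), fun r => by simp, fun r => by simp⟩
    have h1 : ∑ r : Fin n → Bool, H u (fun i => !(r i)) = ∑ r, H u r :=
      Equiv.sum_comp σ (H u)
    have h2 : ∑ r : Fin n → Bool, (H u r + H u (fun i => !(r i))) ≤
        ∑ r : Fin n → Bool, 2 * B u := Finset.sum_le_sum fun r _ => hpair u r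
    rw [Finset.sum_add_distrib, h1] at h2
    simp only [Finset.sum_const, Finset.card_univ, nsmul_eq_mul] at h2
    linarith
  rw [hr]
  simp_rw [hl]
  have hps := Finset.prod_univ_sum (fun _ : Fin n => (Finset.univ : Finset (Fin n → Bool))) H
  rw [Fintype.piFinset_univ] at hps
  rw [← hps]
  calc ∏ u, ∑ r : Fin n → Bool, H u r ≤ ∏ u, ((Fintype.card (Fin n → Bool) : ℝ) * B u) :=
        Finset.prod_le_prod (fun u _ => Finset.sum_nonneg fun r _ => hH0 u r) fun u _ => hsum u
    _ = _ := by
        rw [Finset.prod_mul_distrib]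
        congr 1
        simp

theorem loadsFrom_congr {n : ℕ} (M : ℕ → Matching n) (t₁ : ℕ) (Φ Ψ : ℕ → Fin n → Fin n → Bool)
    (x : Fin n → ℤ) (r : ℕ) (h : ∀ s, s < r → Φ (s + 1) = Ψ (s + 1)) :
    loadsFrom M t₁ Φ x r = loadsFrom M t₁ Ψ x r := by
  induction r with
  | zero => rfl
  | succ r ih =>
    simp only [loadsFrom]
    rw [ih fun s hs => h s (by omega), h r (by omega)]

theorem loadsFrom_nonneg {n : ℕ} (M : ℕ → Matching n) (t₁ : ℕ) (Φ : ℕ → Fin n → Fin n → Bool)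
    (x : Fin n → ℤ) (hx : ∀ u, 0 ≤ x u) (r : ℕ) : ∀ u, 0 ≤ loadsFrom M t₁ Φ x r u := by
  induction r with
  | zero => exact hx
  | succ r ih => exact step_nonneg _ _ _ ih

theorem prodMatrix_succ {n : ℕ} (M : ℕ → Matching n) (t₁ T : ℕ) :
    prodMatrix M (t₁ + 1) (t₁ + (T + 1)) = prodMatrix M (t₁ + 1) (t₁ + T) * (M (t₁ + T + 1)).matrix := by
  have e1 : t₁ + (T + 1) + 1 - (t₁ + 1) = T + 1 := by omega
  have e2 : t₁ + T + 1 - (t₁ + 1) = T := by omega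
  have e3 : t₁ + 1 + T = t₁ + T + 1 := by omega
  simp only [prodMatrix, e1, e2, List.range'_1_concat, List.map_append, List.prod_append,
    List.map_cons, List.map_nil, List.prod_singleton, e3]

theorem prodMatrix_zero {n : ℕ} (M : ℕ → Matching n) (t₁ : ℕ) :
    prodMatrix M (t₁ + 1) (t₁ + 0) = 1 := by
  simp [prodMatrix]

theorem multi_step {n : ℕ} (M : ℕ → Matching n) (t₁ : ℕ) (x : Fin n → ℤ) (hx : ∀ u, 0 ≤ x u)
    (T : ℕ) : ∀ (f : Fin n → ℝ), (∀ v, 0 ≤ f v) →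
    ∑ ω : Fin T → Fin n → Fin n → Bool,
        ∏ v, f v ^ (loadsFrom M t₁ (lift (orientDefault n) ω) x T v).toNat
      ≤ (Fintype.card (Fin T → Fin n → Fin n → Bool) : ℝ) *
        ∏ v, ((prodMatrix M (t₁ + 1) (t₁ + T)).mulVec f v) ^ (x v).toNat := by
  induction T with
  | zero =>
    intro f hf
    rw [prodMatrix_zero]
    simp [loadsFrom]
  | succ T ih =>
    intro f hf
    rw [← Equiv.sum_comp (Fin.snocEquiv (fun _ : Fin (T + 1) => Fin n → Fin n → Bool)),
      Fintype.sum_prod_type_right]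
    have key : ∀ (ω : Fin T → Fin n → Fin n → Bool) (a : Fin n → Fin n → Bool),
        loadsFrom M t₁ (lift (orientDefault n)
          (Fin.snocEquiv (fun _ : Fin (T + 1) => Fin n → Fin n → Bool) (a, ω))) x (T + 1)
        = step (M (t₁ + T + 1)) a (loadsFrom M t₁ (lift (orientDefault n) ω) x T) := by
      intro ω a
      simp only [loadsFrom]
      congr 1
      · simp [lift, Fin.snocEquiv, Fin.snoc]
      · refine loadsFrom_congr _ _ _ _ _ _ fun s hs => ?_
        have : s < T + 1 := by omega
        simp [lift, Fin.snocEquiv, Fin.snoc, hs, this]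
    simp_rw [key]
    rw [prodMatrix_succ, ← Matrix.mulVec_mulVec]
    have h1 := ih ((M (t₁ + T + 1)).matrix.mulVec f) (mulVec_nonneg' _ f hf)
    calc _ ≤ ∑ ω : Fin T → Fin n → Fin n → Bool, (Fintype.card (Fin n → Fin n → Bool) : ℝ) *
          ∏ v, ((M (t₁ + T + 1)).matrix.mulVec f v) ^
            (loadsFrom M t₁ (lift (orientDefault n) ω) x T v).toNat :=
          Finset.sum_le_sum fun ω _ => one_step _ _ (loadsFrom_nonneg _ _ _ _ hx _) f hf
      _ = (Fintype.card (Fin n → Fin n → Bool) : ℝ) * ∑ ω : Fin T → Fin n → Fin n → Bool,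
          ∏ v, ((M (t₁ + T + 1)).matrix.mulVec f v) ^
            (loadsFrom M t₁ (lift (orientDefault n) ω) x T v).toNat := by
          rw [Finset.mul_sum]
      _ ≤ _ := mul_le_mul_of_nonneg_left h1 (by positivity)
      _ = _ := by
          rw [← mul_assoc]
          congr 1
          rw [← Nat.cast_mul]
          congr 1
          rw [Fintype.card_fun (α := Fin (T+1)), Fintype.card_fun (α := Fin T)]
          simp only [Fintype.card_fin]
          rw [pow_succ, mul_comm]

theorem prodMatrix_one {n : ℕ} (M : ℕ → Matching n) (t₁ T : ℕ) :
    (prodMatrix M (t₁ + 1) (t₁ + T)).mulVec (fun _ => (1 : ℝ)) = fun _ => 1 := by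
  induction T with
  | zero => rw [prodMatrix_zero]; simp
  | succ T ih =>
    rw [prodMatrix_succ, ← Matrix.mulVec_mulVec]
    have : (M (t₁ + T + 1)).matrix.mulVec (fun _ => (1 : ℝ)) = fun _ => 1 := by
      ext u
      by_cases h : (M (t₁ + T + 1)).f u = u
      · rw [mulVec_fix _ _ _ h]
      · rw [mulVec_pair _ _ _ h]; norm_num
    rw [this, ih]

theorem le_disc {n : ℕ} (x : Fin n → ℝ) (u v : Fin n) : |x u - x v| ≤ disc x := by
  unfold disc
  exact (le_ciSup (f := fun v => |x u - x v|) (Set.finite_range _).bddAbove v).trans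
    (le_ciSup (f := fun u => ⨆ v, |x u - x v|) (Set.finite_range _).bddAbove u)

theorem entry_bound {n : ℕ} (hn : 0 < n) (M : ℕ → Matching n) (t₁ T : ℕ)
    (h : IsSmoothing M t₁ (t₁ + T) n (((n : ℝ) ^ 3)⁻¹)) (v w : Fin n) :
    prodMatrix M (t₁ + 1) (t₁ + T) v w ≤ 2 / n := by
  have hn1 : (1 : ℝ) ≤ n := by exact_mod_cast hn
  haveI : Nonempty (Fin n) := ⟨v⟩
  set P := prodMatrix M (t₁ + 1) (t₁ + T) with hP
  have hd : disc (Pi.single v (n : ℝ) : Fin n → ℝ) ≤ n := by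
    unfold disc
    refine ciSup_le fun a => ciSup_le fun b => ?_
    by_cases ha : a = v <;> by_cases hb : b = v <;> simp [Pi.single_apply, ha, hb]
  have h2 := h _ hd
  rw [← hP, Matrix.single_vecMul] at h2
  have h3 : (((n : ℝ) ^ 3)⁻¹) ≤ 1 := inv_le_one_of_one_le₀ (one_le_pow₀ hn1)
  have h4 : ∀ u, n * P v w ≤ n * P v u + 1 := by
    intro u
    have := (le_disc _ w u).trans (h2.trans h3)
    have := (abs_le.1 this).2
    simp at this
    linarith
  have h5 : ∑ u, P v u = 1 := by
    have := congrFun (prodMatrix_one M t₁ T) v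
    simpa [Matrix.mulVec, dotProduct] using this
  have h6 := Finset.sum_le_sum (s := Finset.univ) fun u _ => h4 u
  rw [Finset.sum_add_distrib, ← Finset.mul_sum Finset.univ (fun u => P v u), h5] at h6
  simp at h6
  rw [le_div_iff₀ (by linarith)]
  nlinarith

theorem exp_conv (s y Y : ℝ) (hy : 0 ≤ y) (hY : 0 < Y) (hyY : y ≤ Y) :
    Real.exp (s * y) - 1 ≤ y / Y * (Real.exp (s * Y) - 1) := by
  have ht : 0 ≤ y / Y := by positivity
  have ht1 : y / Y ≤ 1 := (div_le_one hY).2 hyY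
  have := convexOn_exp.2 (Set.mem_univ (s * Y)) (Set.mem_univ 0) ht (sub_nonneg.2 ht1) (by ring)
  simp only [smul_eq_mul, mul_zero, add_zero, Real.exp_zero, mul_one] at this
  have e : y / Y * (s * Y) = s * y := by field_simp
  rw [e] at this
  linarith

theorem markov {Ω : Type*} [Fintype Ω] [Nonempty Ω] (Z : Ω → ℝ) (s c E : ℝ) (hs : 0 ≤ s)
    (h : ∑ ω, Real.exp (s * Z ω) ≤ (Fintype.card Ω : ℝ) * Real.exp E) :
    pr (fun ω => c ≤ Z ω) ≤ Real.exp (E - s * c) := by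
  classical
  unfold pr
  have hc : (0 : ℝ) < Fintype.card Ω := by exact_mod_cast Fintype.card_pos
  rw [div_le_iff₀ hc, Real.exp_sub, div_mul_eq_mul_div, le_div_iff₀ (Real.exp_pos _)]
  refine le_trans ?_ (h.trans (mul_comm _ _).le)
  rw [← nsmul_eq_mul]
  refine (Finset.card_nsmul_le_sum _ (fun ω => Real.exp (s * Z ω)) _ ?_).trans
    (Finset.sum_le_sum_of_subset_of_nonneg (Finset.subset_univ _) fun _ _ _ => (Real.exp_pos _).le)
  intro ω hω
  have := (Finset.mem_filter.1 hω).2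
  exact Real.exp_le_exp.2 (mul_le_mul_of_nonneg_left this hs)

theorem mgf_bound {n : ℕ} (hn : 0 < n) (M : ℕ → Matching n) (t₁ T : ℕ)
    (h : IsSmoothing M t₁ (t₁ + T) n (((n : ℝ) ^ 3)⁻¹))
    (x : Fin n → ℤ) (hx : ∀ u, 0 ≤ x u) (y : Fin n → ℝ) (hy : ∀ v, 0 ≤ y v)
    (hy1 : ∑ v, y v = 1) (Y : ℝ) (hY : 0 < Y) (hyY : ∀ v, y v ≤ Y) (s : ℝ) (hs : 0 ≤ s) :
    ∑ ω : Fin T → Fin n → Fin n → Bool, Real.exp (s * ∑ v, y v *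
          (loadsFrom M t₁ (lift (orientDefault n) ω) x T v : ℝ))
      ≤ (Fintype.card (Fin T → Fin n → Fin n → Bool) : ℝ) *
        Real.exp ((∑ u, (x u : ℝ)) * (2 / n * ((Real.exp (s * Y) - 1) / Y))) := by
  have hn1 : (0 : ℝ) < n := by exact_mod_cast hn
  have hD : 0 ≤ Real.exp (s * Y) - 1 := by
    have := Real.add_one_le_exp (s * Y); nlinarith [mul_nonneg hs hY.le]
  have h1 := multi_step M t₁ x hx T (fun v => Real.exp (s * y v)) (fun v => (Real.exp_pos _).le)
  have cast : ∀ k : ℤ, 0 ≤ k → ((k.toNat : ℕ) : ℝ) = (k : ℝ) := by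
    intro k hk
    exact_mod_cast Int.toNat_of_nonneg hk
  refine le_trans (le_of_eq ?_) (h1.trans (mul_le_mul_of_nonneg_left ?_ (by positivity)))
  · refine Finset.sum_congr rfl fun ω _ => ?_
    rw [Finset.mul_sum, Real.exp_sum]
    refine Finset.prod_congr rfl fun v _ => ?_
    rw [← Real.exp_nat_mul, cast _ (loadsFrom_nonneg _ _ _ _ hx _ _)]
    congr 1; ring
  · rw [Finset.sum_mul, Real.exp_sum]
    have hnn : ∀ (f : Fin n → ℝ), (∀ v, 0 ≤ f v) → ∀ v,
        0 ≤ (prodMatrix M (t₁ + 1) (t₁ + T)).mulVec f v := by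
      clear h h1
      induction T with
      | zero => intro f hf v; rw [prodMatrix_zero]; simpa using hf v
      | succ T ih =>
        intro f hf v
        rw [prodMatrix_succ, ← Matrix.mulVec_mulVec]
        exact ih _ (mulVec_nonneg' _ f hf) v
    refine Finset.prod_le_prod (fun v _ => pow_nonneg (hnn _ (fun v => (Real.exp_pos _).le) _) _)
      fun v _ => ?_
    rw [← cast _ (hx v), Real.exp_nat_mul]
    refine pow_le_pow_left₀ (hnn _ (fun v => (Real.exp_pos _).le) _) ?_ _
    refine le_trans ?_ (Real.add_one_le_exp _)
    have h5 := congrFun (prodMatrix_one M t₁ T) v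
    have h0 : (fun v => Real.exp (s * y v)) = (fun v => (Real.exp (s * y v) - 1)) + fun _ => (1:ℝ) := by
      ext; simp
    rw [h0, Matrix.mulVec_add, Pi.add_apply, h5]
    gcongr
    simp only [Matrix.mulVec, dotProduct]
    calc _ ≤ ∑ w, 2 / (n : ℝ) * (y w / Y * (Real.exp (s * Y) - 1)) := by
          refine Finset.sum_le_sum fun w _ => ?_
          refine mul_le_mul (entry_bound hn M t₁ T h v w) (exp_conv s _ Y (hy w) hY (hyY w)) ?_
            (by positivity)
          have := Real.add_one_le_exp (s * y w)
          nlinarith [mul_nonneg hs (hy w)]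
      _ = 2 / (n : ℝ) * ((∑ w, y w) * ((Real.exp (s * Y) - 1) / Y)) := by
          rw [Finset.sum_mul, Finset.mul_sum]
          refine Finset.sum_congr rfl fun w _ => ?_
          ring
      _ = _ := by rw [hy1, one_mul]

/-- Strong tail bound for a convex combination of a sparse load
vector:  if `‖x^{(t₁)}‖₁ ≤ n e^{-(log n)^σ}`, `[t₁,t₂]` is `(n,n⁻³)`-smoothing,
`y ≥ 0` with `‖y‖₁ = 1` and `Z = ∑_v y_v x_v^{(t₂)}`, then for all `δ > 0`,
`P( Z ≥ e^{-(1/5)(log n)^σ} + 8‖y‖_∞ (log n)^δ ) ≤ e^{-(log n)^{δ+σ}/6}`. -/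
theorem stmt15 (σ : ℝ) (hσ0 : 0 < σ) (hσ1 : σ < 1) :
    ∃ N₀ : ℕ, ∀ n : ℕ, N₀ ≤ n →
    ∀ (M : ℕ → Matching n) (t₁ t₂ : ℕ), t₁ < t₂ →
    ∀ x : Fin n → ℤ, (∀ u, 0 ≤ x u) →
    (∑ u, (x u : ℝ)) ≤ n * Real.exp (-(Real.log n) ^ σ) →
    IsSmoothing M t₁ t₂ n (((n : ℝ) ^ 3)⁻¹) →
    ∀ y : Fin n → ℝ, (∀ v, 0 ≤ y v) → (∑ v, y v) = 1 →
    ∀ Z : (Fin (t₂ - t₁) → Fin n → Fin n → Bool) → ℝ,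
      (Z = fun ω => ∑ v, y v *
          (loadsFrom M t₁ (lift (orientDefault n) ω) x (t₂ - t₁) v : ℝ)) →
    ∀ δ : ℝ, 0 < δ →
      pr (fun ω =>
          Real.exp (-(1 / 5) * (Real.log n) ^ σ) + 8 * (⨆ v, y v) * (Real.log n) ^ δ
            ≤ Z ω)
        ≤ Real.exp (-(Real.log n) ^ (δ + σ) / 6) := by
  have htend : Filter.Tendsto (fun n : ℕ => (Real.log n) ^ σ) Filter.atTop Filter.atTop :=
    (tendsto_rpow_atTop hσ0).comp (Real.tendsto_log_atTop.comp tendsto_natCast_atTop_atTop)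
  obtain ⟨N, hN⟩ := Filter.eventually_atTop.1 (htend.eventually_ge_atTop (5 / 2))
  refine ⟨max N 2, fun n hn M t₁ t₂ ht x hx hsum hsm y hy hy1 Z hZ δ hδ => ?_⟩
  have hn2 : 2 ≤ n := (le_max_right _ _).trans hn
  have hn0 : 0 < n := by omega
  have hnr : (0 : ℝ) < n := by exact_mod_cast hn0
  have ha := hN n ((le_max_left _ _).trans hn)
  have hL : 0 < Real.log n := Real.log_pos (by exact_mod_cast hn2)
  obtain ⟨T, rfl⟩ := Nat.exists_eq_add_of_le ht.le
  have hT : t₁ + T - t₁ = T := by omega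
  generalize t₁ + T - t₁ = T' at hT Z hZ ⊢
  obtain rfl : T = T' := hT.symm
  rw [Real.rpow_add hL]
  have hb : 0 < (Real.log n) ^ δ := Real.rpow_pos_of_pos hL δ
  set a := (Real.log n) ^ σ with hadef
  set b := (Real.log n) ^ δ
  set Y := ⨆ v, y v with hYdef
  have hyY : ∀ v, y v ≤ Y := fun v => le_ciSup (f := y) (Set.finite_range _).bddAbove v
  have hY : 0 < Y := by
    by_contra hneg
    push Not at hneg
    have : ∑ v, y v ≤ 0 := Finset.sum_nonpos fun v _ => (hyY v).trans hneg
    linarith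
  have hs : 0 ≤ (4 / 5) * a / Y := by positivity
  have hmgf := mgf_bound hn0 M t₁ _ hsm x hx y hy hy1 Y hY hyY ((4 / 5) * a / Y) hs
  have hmk := markov Z ((4 / 5) * a / Y)
    (Real.exp (-(1 / 5) * a) + 8 * Y * b) _ hs (by rw [hZ]; exact hmgf)
  refine hmk.trans (Real.exp_le_exp.2 ?_)
  have e1 : (4 / 5) * a / Y * Y = (4 / 5) * a := by field_simp
  rw [e1]
  have hD : 0 ≤ (Real.exp (4 / 5 * a) - 1) / Y := by
    have := Real.add_one_le_exp (4 / 5 * a)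
    apply div_nonneg _ hY.le
    linarith
  have e2 : Real.exp (-a) * Real.exp (4 / 5 * a) = Real.exp (-(1 / 5) * a) := by
    rw [← Real.exp_add]; congr 1; ring
  have hE : (∑ u, (x u : ℝ)) * (2 / n * ((Real.exp (4 / 5 * a) - 1) / Y))
      ≤ 2 * Real.exp (-(1 / 5) * a) / Y := by
    calc _ ≤ (n * Real.exp (-a)) * (2 / n * ((Real.exp (4 / 5 * a) - 1) / Y)) :=
          mul_le_mul_of_nonneg_right hsum (by positivity)
      _ = 2 * (Real.exp (-a) * Real.exp (4 / 5 * a) - Real.exp (-a)) / Y := by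
          field_simp
      _ ≤ _ := by
          rw [e2]
          gcongr
          linarith [Real.exp_pos (-a)]
  have e3 : (4 / 5) * a / Y * (Real.exp (-(1 / 5) * a) + 8 * Y * b)
      = (4 / 5 * a) * Real.exp (-(1 / 5) * a) / Y + 32 / 5 * (a * b) := by
    field_simp
    try ring
  rw [e3]
  have h7 : 2 * Real.exp (-(1 / 5) * a) / Y ≤ (4 / 5 * a) * Real.exp (-(1 / 5) * a) / Y := by
    gcongr
    linarith
  have hab : 0 < a * b := by positivity
  linarith [mul_comm a b]

end LB
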